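/- arXiv:2602.23450 — 3 statements merged into one kernel-verified Lean document; each statement's English description precedes it below -/
import Mathlib

section
/- Let R_1, R_2, R_3 be complex rotations and c_1, c_2, c_3 ∈ ℂ³, with essential matrices E_ij = R_i * [c_j − c_i]_× * (R_j)ᵀ for all i ≠ j (so E_ji = (E_ij)ᵀ). Define the diamond operation on 3×3 complex matrices by A ⋄ B := adj(A − B) − adj(A) − adj(B). Then for all pairwise distinct i, j, k ∈ {1,2,3}: (E_jk)ᵀ * adj(E_ij) + adj(E_jk) * (E_ij)ᵀ + (E_ij * E_jk) ⋄ (E_ki)ᵀ = 0. -/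
open Matrix

/-- The skew-symmetric "hat" matrix `[c]ₓ` of `c ∈ ℂ³`, so that `[c]ₓ v = c × v`. -/
def crossMat (c : Fin 3 → ℂ) : Matrix (Fin 3) (Fin 3) ℂ :=
  !![0, -c 2, c 1; c 2, 0, -c 0; -c 1, c 0, 0]

/-- Martyushev's "diamond" operation `A ⋄ B = adj(A − B) − adj(A) − adj(B)`. -/
def diamond (A B : Matrix (Fin 3) (Fin 3) ℂ) : Matrix (Fin 3) (Fin 3) ℂ :=
  (A - B).adjugate - A.adjugate - B.adjugate

/-!
For a rotation `R` one has `adj R = Rᵀ`, so the left-hand side of the condition is equivariant: its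
value at the `E`'s is `R k` times its value at the matrices `[c_j - c_i]ₓ` times `(R i)ᵀ`. With
`a = c_j - c_i` and `b = c_k - c_j` the claim then concerns only `[a]ₓ`, `[b]ₓ` and `[a + b]ₓ`.
There `adj [a]ₓ = a aᵀ` makes the first two terms `(a × b) aᵀ + b (a × b)ᵀ`, while
`[a]ₓ [b]ₓ = b aᵀ - (a ⬝ b) 1` and the polarization of the quadratic map `adj` show that the diamond
is the negative of this.
-/

section Adjugate

variable {n α : Type*} [CommRing α]

lemma adjugate_eq_transpose_of_mem_specialOrthogonalGroup [Fintype n] [DecidableEq n]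
    {R : Matrix n n α} (hR : R ∈ specialOrthogonalGroup n α) : R.adjugate = Rᵀ := by
  obtain ⟨hmul, hdet⟩ := mem_specialOrthogonalGroup_iff.mp hR
  exact left_inv_eq_right_inv (by rw [adjugate_mul, hdet, one_smul])
    ((mem_orthogonalGroup_iff n α).mp hmul)

lemma adjugate_sub_fin_three (A B : Matrix (Fin 3) (Fin 3) α) :
    (A - B).adjugate = A.adjugate + B.adjugate
      + (A.trace • B + B.trace • A - A * B - B * A
        - (A.trace * B.trace - (A * B).trace) • (1 : Matrix (Fin 3) (Fin 3) α)) := by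
  ext i j
  fin_cases i <;> fin_cases j <;>
    simp [adjugate_fin_three, trace_fin_three, mul_apply, Fin.sum_univ_three] <;> ring

end Adjugate

section Diamond

variable (A B : Matrix (Fin 3) (Fin 3) ℂ)

lemma diamond_eq_trace_smul_sub_mul :
    diamond A B = A.trace • B + B.trace • A - A * B - B * A
      - (A.trace * B.trace - (A * B).trace) • (1 : Matrix (Fin 3) (Fin 3) ℂ) := by
  rw [diamond, adjugate_sub_fin_three]
  abel

lemma diamond_mul_mul (P Q : Matrix (Fin 3) (Fin 3) ℂ) :
    diamond (P * A * Q) (P * B * Q) = Q.adjugate * diamond A B * P.adjugate := by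
  simp only [diamond, ← sub_mul, ← mul_sub, adjugate_mul_distrib, mul_assoc]

end Diamond

section CrossMat

variable (a b c v : Fin 3 → ℂ)

lemma crossMat_mulVec : crossMat c *ᵥ v = c ⨯₃ v := by
  ext i
  fin_cases i <;> simp [crossMat, cross_apply, vecHead, vecTail] <;> ring

lemma crossMat_neg : crossMat (-c) = -crossMat c := by
  simp [crossMat]

lemma transpose_crossMat : (crossMat c)ᵀ = -crossMat c := by
  ext i j
  fin_cases i <;> fin_cases j <;> simp [crossMat]

lemma vecMul_crossMat : v ᵥ* crossMat c = v ⨯₃ c := by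
  rw [← mulVec_transpose, transpose_crossMat, neg_mulVec, crossMat_mulVec, cross_anticomm]

lemma trace_crossMat : (crossMat c).trace = 0 := by
  simp [crossMat, trace_fin_three]

lemma adjugate_crossMat : (crossMat c).adjugate = vecMulVec c c := by
  ext i j
  fin_cases i <;> fin_cases j <;>
    simp [crossMat, adjugate_fin_three, vecMulVec_apply] <;> ring

lemma crossMat_mul_crossMat :
    crossMat a * crossMat b = vecMulVec b a - (a ⬝ᵥ b) • (1 : Matrix (Fin 3) (Fin 3) ℂ) := by
  refine ext_of_mulVec_single fun i ↦ ?_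
  rw [← mulVec_mulVec, crossMat_mulVec, crossMat_mulVec, cross_cross_eq_smul_sub_smul',
    sub_mulVec, vecMulVec_mulVec, smul_mulVec, one_mulVec, op_smul_eq_smul, dotProduct_comm b a]

lemma diamond_crossMat_mul_crossMat :
    diamond (crossMat a * crossMat b) (crossMat (a + b))
      = -(vecMulVec (a ⨯₃ b) a + vecMulVec b (a ⨯₃ b)) := by
  have trace_left : (crossMat a * crossMat b).trace = -2 * (a ⬝ᵥ b) := by
    rw [crossMat_mul_crossMat, trace_sub, trace_vecMulVec, dotProduct_comm b a, trace_smul,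
      trace_one, Fintype.card_fin, smul_eq_mul]
    ring
  have mul_right : crossMat a * crossMat b * crossMat (a + b)
      = vecMulVec b (a ⨯₃ b) - (a ⬝ᵥ b) • crossMat (a + b) := by
    rw [crossMat_mul_crossMat, sub_mul, vecMulVec_mul, vecMul_crossMat, smul_one_mul, map_add,
      cross_self, zero_add]
  have mul_left : crossMat (a + b) * (crossMat a * crossMat b)
      = vecMulVec (a ⨯₃ b) a - (a ⬝ᵥ b) • crossMat (a + b) := by
    rw [crossMat_mul_crossMat, mul_sub, mul_vecMulVec, crossMat_mulVec, mul_smul_one, map_add,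
      LinearMap.add_apply, cross_self, add_zero]
  have trace_mul : (crossMat a * crossMat b * crossMat (a + b)).trace = 0 := by
    rw [mul_right, trace_sub, trace_vecMulVec, dot_cross_self, trace_smul, trace_crossMat,
      smul_zero, sub_zero]
  rw [diamond_eq_trace_smul_sub_mul, trace_mul, trace_left, trace_crossMat, mul_right, mul_left]
  module

end CrossMat

/-- The left-hand side of Martyushev's condition (2.18) for essential matrices `A = E_ij` and
`B = E_jk`, with `C` standing for `(E_ki)ᵀ`; it measures the failure of the triple to be
compatible. -/
def compatibilityDefect (A B C : Matrix (Fin 3) (Fin 3) ℂ) : Matrix (Fin 3) (Fin 3) ℂ :=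
  Bᵀ * A.adjugate + B.adjugate * Aᵀ + diamond (A * B) C

lemma compatibilityDefect_crossMat (a b : Fin 3 → ℂ) :
    compatibilityDefect (crossMat a) (crossMat b) (crossMat (a + b)) = 0 := by
  have first_term : (crossMat b)ᵀ * (crossMat a).adjugate = vecMulVec (a ⨯₃ b) a := by
    rw [transpose_crossMat, adjugate_crossMat, mul_vecMulVec, neg_mulVec, crossMat_mulVec,
      cross_anticomm]
  have second_term : (crossMat b).adjugate * (crossMat a)ᵀ = vecMulVec b (a ⨯₃ b) := by
    rw [adjugate_crossMat, vecMulVec_mul, vecMul_transpose, crossMat_mulVec]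
  rw [compatibilityDefect, first_term, second_term, diamond_crossMat_mul_crossMat, add_neg_cancel]

lemma compatibilityDefect_mul_mul_transpose {R S T : Matrix (Fin 3) (Fin 3) ℂ}
    (hR : R ∈ specialOrthogonalGroup (Fin 3) ℂ) (hS : S ∈ specialOrthogonalGroup (Fin 3) ℂ)
    (hT : T ∈ specialOrthogonalGroup (Fin 3) ℂ)
    (A B C : Matrix (Fin 3) (Fin 3) ℂ) :
    compatibilityDefect (R * A * Sᵀ) (S * B * Tᵀ) (R * C * Tᵀ)
      = T * compatibilityDefect A B C * Rᵀ := by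
  have cancel (X : Matrix (Fin 3) (Fin 3) ℂ) : Sᵀ * (S * X) = X := by
    rw [← mul_assoc, (mem_orthogonalGroup_iff' (Fin 3) ℂ).mp hS.1, one_mul]
  have product : R * A * Sᵀ * (S * B * Tᵀ) = R * (A * B) * Tᵀ := by
    simp only [mul_assoc, cancel]
  rw [compatibilityDefect, product, diamond_mul_mul]
  simp only [compatibilityDefect, adjugate_mul_distrib, ← adjugate_transpose,
    adjugate_eq_transpose_of_mem_specialOrthogonalGroup hR,
    adjugate_eq_transpose_of_mem_specialOrthogonalGroup hS,
    adjugate_eq_transpose_of_mem_specialOrthogonalGroup hT,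
    transpose_mul, transpose_transpose, mul_assoc, cancel, mul_add, add_mul]

/-- Martyushev's necessary condition (2.18) for compatible essential matrix triples.
Indices are 0-based: camera `i+1` of the paper is camera `i` here. -/
theorem stmt14 (R : Fin 3 → Matrix (Fin 3) (Fin 3) ℂ) (c : Fin 3 → Fin 3 → ℂ)
    (hR : ∀ i, R i * (R i)ᵀ = 1) (hdR : ∀ i, (R i).det = 1)
    (E : Fin 3 → Fin 3 → Matrix (Fin 3) (Fin 3) ℂ)
    (hE : ∀ i j, E i j = R i * crossMat (c j - c i) * (R j)ᵀ) :
    ∀ i j k : Fin 3, i ≠ j → j ≠ k → i ≠ k →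
      (E j k)ᵀ * (E i j).adjugate + (E j k).adjugate * (E i j)ᵀ
        + diamond (E i j * E j k) ((E k i)ᵀ) = 0 := by
  intro i j k _ _ _
  have rotation (l : Fin 3) : R l ∈ specialOrthogonalGroup (Fin 3) ℂ :=
    ⟨(mem_orthogonalGroup_iff (Fin 3) ℂ).mpr (hR l), hdR l⟩
  have transpose_E : (E k i)ᵀ = R i * crossMat ((c j - c i) + (c k - c j)) * (R k)ᵀ := by
    rw [hE, transpose_mul, transpose_mul, transpose_transpose, transpose_crossMat,
      ← crossMat_neg, neg_sub, mul_assoc, add_comm, sub_add_sub_cancel]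
  change compatibilityDefect (E i j) (E j k) (E k i)ᵀ = 0
  rw [transpose_E, hE i j, hE j k,
    compatibilityDefect_mul_mul_transpose (rotation i) (rotation j) (rotation k),
    compatibilityDefect_crossMat, mul_zero, zero_mul]
end

section
/- Let R_1, R_2, R_3 be complex rotations and c_1, c_2, c_3 ∈ ℂ³, with essential matrices E_ij = R_i * [c_j − c_i]_× * (R_j)ᵀ for i ≠ j (so E_ji = (E_ij)ᵀ). Let F be the 9×9 complex matrix, indexed by (Fin 3) × (Fin 3), whose (i,j) block is E_ij for i ≠ j and whose diagonal blocks are zero. Then trace(F^2)^2 − 16 * trace(F^4) + 24 * (trace((E_12)ᵀ * E_12)^2 + trace((E_13)ᵀ * E_13)^2 + trace((E_23)ᵀ * E_23)^2) = 0. -/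
open Matrix

/-!
Conjugating by the block diagonal matrix of the rotations replaces every `E i j` by `[d i j]ₓ`,
where `d i j = c j - c i`. Since `[x]ₓ [y]ₓ = y xᵀ - (x ⬝ y) 1`, the trace of
`[x]ₓ [y]ₓ [z]ₓ [w]ₓ` is `(x ⬝ y) (z ⬝ w) + (w ⬝ x) (y ⬝ z)`. Summed over closed walks
`i → j → k → l → i`, both terms give `tr G²`, where `G i k = ∑ j, d i j ⬝ d j k`, because rotating
the walk by one step exchanges them. Hence `tr F² = -2 tr G` and `tr F⁴ = 2 tr G²` for any number
of cameras, and for three cameras the claim is a polynomial identity in the inner products of the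
camera centers.
-/

section BlockTrace

variable {ι κ m n K : Type*} [Fintype m] [Fintype n]

theorem trace_transpose_mul_self_of_orthogonal [DecidableEq m] [DecidableEq n] [CommRing K]
    {R : Matrix m m K} {R' : Matrix n n K} (hR : R * Rᵀ = 1) (hR' : R' * R'ᵀ = 1)
    (S : Matrix m n K) :
    ((R * S * R'ᵀ)ᵀ * (R * S * R'ᵀ)).trace = (Sᵀ * S).trace := by
  calc ((R * S * R'ᵀ)ᵀ * (R * S * R'ᵀ)).trace
      = (R' * (Sᵀ * (Rᵀ * R) * S * R'ᵀ)).trace := by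
        simp only [transpose_mul, transpose_transpose, Matrix.mul_assoc]
    _ = (Sᵀ * S * (R'ᵀ * R')).trace := by
        rw [mul_eq_one_comm.mp hR, Matrix.mul_one, trace_mul_comm, Matrix.mul_assoc]
    _ = (Sᵀ * S).trace := by rw [mul_eq_one_comm.mp hR', Matrix.mul_one]

variable [Fintype ι]

theorem trace_comp_mul_comp [Fintype κ] [NonUnitalNonAssocSemiring K]
    (M : Matrix ι κ (Matrix m n K)) (N : Matrix κ ι (Matrix n m K)) :
    (comp ι κ m n K M * comp κ ι n m K N).trace = ∑ i, ∑ k, (M i k * N k i).trace := by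
  simp only [trace, diag_apply, mul_apply, Fintype.sum_prod_type, comp_apply]
  exact Finset.sum_congr rfl fun i _ ↦ Finset.sum_comm

theorem trace_comp_conj_pow [DecidableEq ι] [DecidableEq n] [CommRing K]
    (R R' : ι → Matrix n n K) (hR : ∀ i, R i * R' i = 1) (M : Matrix ι ι (Matrix n n K)) (k : ℕ) :
    (comp ι ι n n K (of fun i j ↦ R i * M i j * R' j) ^ k).trace =
      (comp ι ι n n K M ^ k).trace := by
  have hR' (i : ι) : R' i * R i = 1 := mul_eq_one_comm.mp (hR i)
  let D : (Matrix ι ι (Matrix n n K))ˣ :=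
    ⟨diagonal R, diagonal R', by simp [diagonal_mul_diagonal, hR],
      by simp [diagonal_mul_diagonal, hR']⟩
  let U := D.map (compRingEquiv ι n K : _ →* Matrix (ι × n) (ι × n) K)
  have conj_eq : comp ι ι n n K (of fun i j ↦ R i * M i j * R' j) =
      U * comp ι ι n n K M * (U⁻¹ : (Matrix (ι × n) (ι × n) K)ˣ) := by
    have blocks_eq : (of fun i j ↦ R i * M i j * R' j) = diagonal R * M * diagonal R' := by
      ext1 i j
      simp only [of_apply, mul_diagonal, diagonal_mul]
    rw [blocks_eq]
    exact (map_mul (compRingEquiv ι n K) _ _).trans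
      (congrArg (· * _) (map_mul (compRingEquiv ι n K) _ _))
  rw [conj_eq, Units.conj_pow, trace_units_conj]

end BlockTrace

section CrossMatrix

variable {K : Type*} [CommRing K]

/-- The matrix of `v ↦ a ⨯₃ v` over an arbitrary commutative ring, generalizing `crossMat`. -/
def crossMatrix (a : Fin 3 → K) : Matrix (Fin 3) (Fin 3) K :=
  (crossProduct a).toMatrix'

theorem crossMat_eq_crossMatrix (a : Fin 3 → ℂ) : crossMat a = crossMatrix a := by
  ext i j
  fin_cases i <;> fin_cases j <;>
    simp [crossMat, crossMatrix, LinearMap.toMatrix'_apply, cross_apply]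

theorem crossMatrix_zero : crossMatrix (0 : Fin 3 → K) = 0 := by
  simp [crossMatrix]

theorem crossMatrix_transpose (a : Fin 3 → K) : (crossMatrix a)ᵀ = -crossMatrix a := by
  ext i j
  fin_cases i <;> fin_cases j <;> simp [crossMatrix, LinearMap.toMatrix'_apply, cross_apply]

theorem crossMatrix_mul_crossMatrix (a b : Fin 3 → K) :
    crossMatrix a * crossMatrix b = vecMulVec b a - (a ⬝ᵥ b) • 1 := by
  refine Matrix.toLin'.injective (LinearMap.ext fun v ↦ ?_)
  simp [crossMatrix, cross_cross_eq_smul_sub_smul', vecMulVec_mulVec, dotProduct_comm b a]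

theorem trace_crossMatrix_mul_crossMatrix (a b : Fin 3 → K) :
    (crossMatrix a * crossMatrix b).trace = -2 * (a ⬝ᵥ b) := by
  simp only [crossMatrix_mul_crossMatrix, trace_sub, trace_vecMulVec, trace_smul, trace_one,
    Fintype.card_fin, smul_eq_mul, dotProduct_comm b a]
  push_cast
  ring

theorem trace_crossMatrix_mul_four (a b c d : Fin 3 → K) :
    (crossMatrix a * crossMatrix b * (crossMatrix c * crossMatrix d)).trace =
      (a ⬝ᵥ b) * (c ⬝ᵥ d) + (d ⬝ᵥ a) * (b ⬝ᵥ c) := by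
  simp only [crossMatrix_mul_crossMatrix, sub_mul, mul_sub, vecMulVec_mul_vecMulVec,
    Matrix.smul_mul, Matrix.mul_smul, Matrix.one_mul, Matrix.mul_one, trace_sub, trace_smul,
    trace_vecMulVec, trace_one, Fintype.card_fin, smul_eq_mul, dotProduct_smul, dotProduct_comm b a,
    dotProduct_comm d c, dotProduct_comm a d, dotProduct_comm b c]
  push_cast
  ring

theorem trace_transpose_crossMatrix_mul_self (a : Fin 3 → K) :
    ((crossMatrix a)ᵀ * crossMatrix a).trace = 2 * (a ⬝ᵥ a) := by
  rw [crossMatrix_transpose, Matrix.neg_mul, trace_neg, trace_crossMatrix_mul_crossMatrix]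
  ring

end CrossMatrix

section CrossBlock

variable {ι K : Type*} [Fintype ι] [CommRing K]

/-- The block matrix whose `(i, j)` block is the cross-product matrix of `d i j`; for
`d i j = c j - c i` it is the matrix of essential matrices with all rotations equal to `1`. -/
def crossBlock (d : ι → ι → Fin 3 → K) : Matrix (ι × Fin 3) (ι × Fin 3) K :=
  comp ι ι (Fin 3) (Fin 3) K (of fun i j ↦ crossMatrix (d i j))

/-- The matrix `G` whose `(i, k)` entry sums the inner products of consecutive displacements over
all two-step walks `i → j → k`; it determines the traces of the second and fourth powers of
`crossBlock d`. -/
def twoStepGram (d : ι → ι → Fin 3 → K) : Matrix ι ι K :=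
  of fun i k ↦ ∑ j, d i j ⬝ᵥ d j k

variable [DecidableEq ι] (d : ι → ι → Fin 3 → K)

theorem trace_crossBlock_sq : (crossBlock d ^ 2).trace = -2 * (twoStepGram d).trace := by
  rw [sq, crossBlock, trace_comp_mul_comp]
  simp only [of_apply, trace_crossMatrix_mul_crossMatrix]
  simp only [trace, diag_apply, twoStepGram, of_apply, Finset.mul_sum]

theorem crossBlock_sq : crossBlock d ^ 2 = comp ι ι (Fin 3) (Fin 3) K
    (of fun i k ↦ ∑ j, crossMatrix (d i j) * crossMatrix (d j k)) := by
  rw [sq]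
  refine ((compRingEquiv ι (Fin 3) K).map_mul _ _).symm.trans (congrArg _ ?_)
  ext1 i k
  simp only [mul_apply, of_apply]

theorem trace_crossBlock_pow_four_eq_sum : (crossBlock d ^ 4).trace =
    ∑ i, ∑ k, ∑ j, ∑ l, ((d i j ⬝ᵥ d j k) * (d k l ⬝ᵥ d l i) +
      (d l i ⬝ᵥ d i j) * (d j k ⬝ᵥ d k l)) := by
  rw [pow_mul (crossBlock d) 2 2, crossBlock_sq, sq, trace_comp_mul_comp]
  simp only [of_apply, Finset.sum_mul_sum, trace_sum, trace_crossMatrix_mul_four]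

theorem trace_twoStepGram_sq : (twoStepGram d ^ 2).trace =
    ∑ i, ∑ k, ∑ j, ∑ l, (d i j ⬝ᵥ d j k) * (d k l ⬝ᵥ d l i) := by
  simp only [sq, trace, diag_apply, mul_apply, twoStepGram, of_apply, Finset.sum_mul_sum]

theorem trace_crossBlock_pow_four :
    (crossBlock d ^ 4).trace = 2 * (twoStepGram d ^ 2).trace := by
  have rotated_walk_sum : ∑ i, ∑ k, ∑ j, ∑ l, (d l i ⬝ᵥ d i j) * (d j k ⬝ᵥ d k l) =
      (twoStepGram d ^ 2).trace := by
    rw [trace_twoStepGram_sq]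
    calc ∑ i, ∑ k, ∑ j, ∑ l, (d l i ⬝ᵥ d i j) * (d j k ⬝ᵥ d k l)
        = ∑ i, ∑ l, ∑ k, ∑ j, (d l i ⬝ᵥ d i j) * (d j k ⬝ᵥ d k l) :=
          Finset.sum_congr rfl fun _ _ ↦ Finset.sum_comm_cycle
      _ = ∑ l, ∑ i, ∑ k, ∑ j, (d l i ⬝ᵥ d i j) * (d j k ⬝ᵥ d k l) := Finset.sum_comm
      _ = ∑ l, ∑ j, ∑ i, ∑ k, (d l i ⬝ᵥ d i j) * (d j k ⬝ᵥ d k l) :=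
          Finset.sum_congr rfl fun _ _ ↦ Finset.sum_comm_cycle
  simp only [trace_crossBlock_pow_four_eq_sum, Finset.sum_add_distrib, rotated_walk_sum,
    ← trace_twoStepGram_sq, two_mul]

end CrossBlock

section ThreeCameras

variable {K : Type*} [CommRing K]

theorem trace_crossBlock_quartic_eq_zero (c : Fin 3 → Fin 3 → K) :
    (crossBlock (fun i j ↦ c j - c i) ^ 2).trace ^ 2
      - 16 * (crossBlock (fun i j ↦ c j - c i) ^ 4).trace
      + 96 * (((c 1 - c 0) ⬝ᵥ (c 1 - c 0)) ^ 2 + ((c 2 - c 0) ⬝ᵥ (c 2 - c 0)) ^ 2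
        + ((c 2 - c 1) ⬝ᵥ (c 2 - c 1)) ^ 2) = 0 := by
  rw [trace_crossBlock_sq, trace_crossBlock_pow_four, sq (twoStepGram _)]
  simp only [trace_fin_three, mul_apply, Fin.sum_univ_three, twoStepGram, of_apply,
    sub_dotProduct, dotProduct_sub, dotProduct_comm (c 1) (c 0), dotProduct_comm (c 2) (c 0),
    dotProduct_comm (c 2) (c 1)]
  ring

theorem stmt15_general (R : Fin 3 → Matrix (Fin 3) (Fin 3) K) (c : Fin 3 → Fin 3 → K)
    (hR : ∀ i, R i * (R i)ᵀ = 1) (E : Fin 3 → Fin 3 → Matrix (Fin 3) (Fin 3) K)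
    (hE : ∀ i j, E i j = R i * crossMatrix (c j - c i) * (R j)ᵀ)
    (F : Matrix (Fin 3 × Fin 3) (Fin 3 × Fin 3) K)
    (hF : ∀ p q, F p q = if p.1 = q.1 then 0 else E p.1 q.1 p.2 q.2) :
    (F ^ 2).trace ^ 2 - 16 * (F ^ 4).trace
      + 24 * (((E 0 1)ᵀ * E 0 1).trace ^ 2 + ((E 0 2)ᵀ * E 0 2).trace ^ 2
        + ((E 1 2)ᵀ * E 1 2).trace ^ 2) = 0 := by
  have E_self (i : Fin 3) : E i i = 0 := by simp [hE, crossMatrix_zero]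
  have F_eq : F = comp _ _ _ _ K (of fun i j ↦ R i * crossMatrix (c j - c i) * (R j)ᵀ) := by
    ext ⟨i, a⟩ ⟨j, b⟩
    rw [hF, comp_apply, of_apply, ← hE]
    split_ifs with hij
    · simp [show i = j from hij, E_self]
    · rfl
  have trace_F_pow (m : ℕ) :
      (F ^ m).trace = (crossBlock (fun i j ↦ c j - c i) ^ m).trace := by
    rw [F_eq]
    exact trace_comp_conj_pow R (fun i ↦ (R i)ᵀ) hR _ m
  have trace_E (i j : Fin 3) :
      ((E i j)ᵀ * E i j).trace = 2 * ((c j - c i) ⬝ᵥ (c j - c i)) := by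
    rw [hE, trace_transpose_mul_self_of_orthogonal (hR i) (hR j),
      trace_transpose_crossMatrix_mul_self]
  rw [trace_F_pow, trace_F_pow, trace_E, trace_E, trace_E]
  linear_combination trace_crossBlock_quartic_eq_zero c

end ThreeCameras

/-- Martyushev's quartic necessary condition (2.19) for compatible essential matrix
triples, via the 9×9 block matrix of (2.7).
Indices are 0-based: camera `i+1` of the paper is camera `i` here. -/
theorem stmt15 (R : Fin 3 → Matrix (Fin 3) (Fin 3) ℂ) (c : Fin 3 → Fin 3 → ℂ)
    (hR : ∀ i, R i * (R i)ᵀ = 1) (hdR : ∀ i, (R i).det = 1)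
    (E : Fin 3 → Fin 3 → Matrix (Fin 3) (Fin 3) ℂ)
    (hE : ∀ i j, E i j = R i * crossMat (c j - c i) * (R j)ᵀ)
    (F : Matrix (Fin 3 × Fin 3) (Fin 3 × Fin 3) ℂ)
    (hF : ∀ p q, F p q = if p.1 = q.1 then 0 else E p.1 q.1 p.2 q.2) :
    (F ^ 2).trace ^ 2 - 16 * (F ^ 4).trace
      + 24 * (((E 0 1)ᵀ * E 0 1).trace ^ 2 + ((E 0 2)ᵀ * E 0 2).trace ^ 2
        + ((E 1 2)ᵀ * E 1 2).trace ^ 2) = 0 :=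
  stmt15_general R c hR E (fun i j ↦ by rw [hE, crossMat_eq_crossMatrix]) F hF
end

section
/- Let R_1, R_2, R_3 be complex rotations and c_1, c_2, c_3 ∈ ℂ³, with essential matrices E_ij = R_i * [c_j − c_i]_× * (R_j)ᵀ for i ≠ j (so E_ji = (E_ij)ᵀ). Let F be the 9×9 complex matrix, indexed by (Fin 3) × (Fin 3), whose (i,j) block is E_ij for i ≠ j and whose diagonal blocks are zero. Then the sextic constraint holds: trace(F^2)^3 − 12 * trace(F^2) * trace(F^4) + 32 * trace(F^6) = 0. -/
open Matrix

/-!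
Write `Cᵢ = [cᵢ]ₓ`. The block matrix `F`, with blocks `Rᵢ (Cⱼ - Cᵢ) Rⱼᵀ`, factors as `X * Y` through
a `3 + 3`-dimensional space, and with `n` cameras `Y * X` is the block matrix `[S, T; -n, -S]`,
where `S = ∑ Cᵢ` and `T = ∑ Cᵢ²`. Its square is block upper triangular with both diagonal blocks
equal to `Q = S² - n T`, so `tr F²ᵏ = 2 tr Qᵏ` for `k ≥ 1`.

Since `2 Q = -∑ᵢⱼ [cⱼ - cᵢ]ₓ²` and `[d]ₓ² = d dᵀ - (d ⬝ d) 1`, we get `2 Q = tr G - G` for the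
scatter matrix `G = ∑ᵢⱼ (cⱼ - cᵢ) (cⱼ - cᵢ)ᵀ`, and the sextic in `F` becomes `-24 det G`. The image
of `G` lies in the span of the differences `cⱼ - cᵢ`, so `det G = 0` as soon as the centers are
coplanar, and three points always are.
-/

section CauchySchwarzDefect

variable {ι A : Type*} [Fintype ι] [Ring A]

/-- The left side minus the right side of the Cauchy–Schwarz inequality `(∑ xᵢ)² ≤ n ∑ xᵢ²`, for a
family in a ring that need not be commutative. For `xᵢ = [cᵢ]ₓ` this is the matrix `Q`. -/
def cauchySchwarzDefect (x : ι → A) : A :=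
  (∑ i, x i) ^ 2 - Fintype.card ι • ∑ i, x i ^ 2

lemma sum_sum_sub_sq (x : ι → A) :
    ∑ i, ∑ j, (x j - x i) ^ 2 = -(2 • cauchySchwarzDefect x) := by
  have hexpand (i j) : (x j - x i) ^ 2 = x j ^ 2 - x j * x i - x i * x j + x i ^ 2 := by
    noncomm_ring
  simp only [cauchySchwarzDefect, hexpand, Finset.sum_add_distrib, Finset.sum_sub_distrib,
    ← Finset.mul_sum, ← Finset.sum_mul, Finset.sum_const, Finset.card_univ, ← Finset.smul_sum]
  noncomm_ring

end CauchySchwarzDefect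

section TracePowers

variable {m n p K : Type*} [Fintype m] [Fintype n] [Fintype p]
  [DecidableEq m] [DecidableEq n] [DecidableEq p]

lemma mul_pow_succ_eq_mul_pow_mul [Semiring K] (X : Matrix m n K) (Y : Matrix n m K) (k : ℕ) :
    (X * Y) ^ (k + 1) = X * (Y * X) ^ k * Y := by
  induction k with
  | zero => simp
  | succ k ih => rw [pow_succ, ih, pow_succ (Y * X)]; simp only [Matrix.mul_assoc]

lemma trace_mul_pow_comm [CommSemiring K] (X : Matrix m n K) (Y : Matrix n m K) {k : ℕ}
    (hk : k ≠ 0) :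
    ((X * Y) ^ k).trace = ((Y * X) ^ k).trace := by
  obtain ⟨l, rfl⟩ := Nat.exists_eq_succ_of_ne_zero hk
  rw [Nat.succ_eq_add_one, mul_pow_succ_eq_mul_pow_mul, Matrix.trace_mul_comm, ← Matrix.mul_assoc,
    ← pow_succ']

lemma exists_fromBlocks_zero₂₁_pow_eq [Semiring K] (A : Matrix m m K) (B : Matrix m n K)
    (D : Matrix n n K) (k : ℕ) :
    ∃ B', fromBlocks A B 0 D ^ k = fromBlocks (A ^ k) B' 0 (D ^ k) := by
  induction k with
  | zero => exact ⟨0, by simp only [pow_zero, fromBlocks_one]⟩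
  | succ k ih =>
    obtain ⟨B', hB'⟩ := ih
    exact ⟨A ^ k * B + B' * D, by simp [pow_succ, hB', fromBlocks_multiply]⟩

lemma trace_fromBlocks_zero₂₁_pow [Semiring K] (A : Matrix m m K) (B : Matrix m n K)
    (D : Matrix n n K) (k : ℕ) :
    (fromBlocks A B 0 D ^ k).trace = (A ^ k).trace + (D ^ k).trace := by
  obtain ⟨B', hB'⟩ := exists_fromBlocks_zero₂₁_pow_eq A B D k
  simp [hB', trace, Fintype.sum_sum_type]

variable [CommRing K]

lemma fromBlocks_neg_smul_one_sq (S T : Matrix n n K) (a : K) :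
    fromBlocks S T (-(a • 1)) (-S) ^ 2 =
      fromBlocks (S ^ 2 - a • T) (S * T - T * S) 0 (S ^ 2 - a • T) := by
  rw [sq, fromBlocks_multiply]
  congr 1 <;> simp [sq, sub_eq_add_neg, add_comm]

lemma trace_pow_two_mul_mul_sub_mul {U W : Matrix p n K} {V Z : Matrix n p K} {S : Matrix n n K}
    {a : K} (hVU : V * U = a • 1) (hZU : Z * U = S) (hVW : V * W = S) {k : ℕ} (hk : k ≠ 0) :
    ((U * Z - W * V) ^ (2 * k)).trace = 2 * ((S ^ 2 - a • (Z * W)) ^ k).trace := by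
  have hfactor : U * Z - W * V = fromCols U W * fromRows Z (-V) := by
    rw [fromCols_mul_fromRows, Matrix.mul_neg, sub_eq_add_neg]
  have hswap : fromRows Z (-V) * fromCols U W = fromBlocks S (Z * W) (-(a • 1)) (-S) := by
    rw [fromRows_mul_fromCols, hZU, Matrix.neg_mul, hVU, Matrix.neg_mul, hVW]
  rw [hfactor, trace_mul_pow_comm _ _ (by lia), hswap, pow_mul, fromBlocks_neg_smul_one_sq,
    trace_fromBlocks_zero₂₁_pow, two_mul]

end TracePowers

section BlockDifference

variable {ι l m n K : Type*}

/-- The matrices `A i` stacked on top of each other. -/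
def blockCol (A : ι → Matrix m n K) : Matrix (ι × m) n K :=
  of fun p k => A p.1 p.2 k

/-- The matrices `A i` placed next to each other. -/
def blockRow (A : ι → Matrix n m K) : Matrix n (ι × m) K :=
  of fun k q => A q.1 k q.2

variable [CommRing K]

/-- The block matrix whose `(i, j)` block is `U i * (C j - C i) * V j`. For rotations `U i` with
inverses `V i` and `C i` the matrix of `cᵢ × ·`, these blocks are the essential matrices. -/
def blockDifference [Fintype n] (U : ι → Matrix m n K) (C : ι → Matrix n n K)
    (V : ι → Matrix n m K) : Matrix (ι × m) (ι × m) K :=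
  of fun p q => (U p.1 * (C q.1 - C p.1) * V q.1) p.2 q.2

lemma blockRow_mul_blockCol [Fintype ι] [Fintype m] (A : ι → Matrix l m K)
    (B : ι → Matrix m n K) :
    blockRow A * blockCol B = ∑ i, A i * B i := by
  ext a b
  simp only [blockRow, blockCol, mul_apply, of_apply, Fintype.sum_prod_type,
    Matrix.sum_apply]

lemma blockDifference_eq_sub [Fintype n] (U : ι → Matrix m n K) (C : ι → Matrix n n K)
    (V : ι → Matrix n m K) :
    blockDifference U C V =
      blockCol U * blockRow (fun i => C i * V i) - blockCol (fun i => U i * C i) * blockRow V := by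
  ext ⟨i, a⟩ ⟨j, b⟩
  have hblock : U i * (C j - C i) * V j = U i * (C j * V j) - U i * C i * V j := by
    rw [Matrix.mul_sub, Matrix.sub_mul, Matrix.mul_assoc (U i) (C j)]
  exact congrFun₂ hblock a b

lemma trace_blockDifference_pow_two_mul [Fintype ι] [Fintype m] [Fintype n] [DecidableEq ι]
    [DecidableEq m] [DecidableEq n] {U : ι → Matrix m n K} {V : ι → Matrix n m K}
    (hVU : ∀ i, V i * U i = 1) (C : ι → Matrix n n K) {k : ℕ} (hk : k ≠ 0) :
    (blockDifference U C V ^ (2 * k)).trace = 2 * (cauchySchwarzDefect C ^ k).trace := by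
  have hrow (i) : C i * V i * U i = C i := by rw [Matrix.mul_assoc, hVU, Matrix.mul_one]
  have hcol (i) : V i * (U i * C i) = C i := by rw [← Matrix.mul_assoc, hVU, Matrix.one_mul]
  have hsq : blockRow (fun i => C i * V i) * blockCol (fun i => U i * C i) = ∑ i, C i ^ 2 := by
    simp only [blockRow_mul_blockCol, Matrix.mul_assoc, hcol, sq]
  rw [blockDifference_eq_sub, cauchySchwarzDefect, ← Nat.cast_smul_eq_nsmul K, ← hsq]
  apply trace_pow_two_mul_mul_sub_mul _ _ _ hk <;>
    simp only [blockRow_mul_blockCol, hVU, hrow, hcol]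
  simp [Nat.cast_smul_eq_nsmul]

end BlockDifference

section CrossProductMatrix

variable {K : Type*} [CommRing K]

lemma toMatrix'_crossProduct_sq (v : Fin 3 → K) :
    (crossProduct v).toMatrix' ^ 2 = vecMulVec v v - (v ⬝ᵥ v) • 1 := by
  refine Matrix.ext_of_mulVec_single fun i => ?_
  rw [sq, ← mulVec_mulVec, LinearMap.toMatrix'_mulVec, LinearMap.toMatrix'_mulVec,
    cross_cross_eq_smul_sub_smul', sub_mulVec, vecMulVec_mulVec, smul_mulVec, one_mulVec,
    op_smul_eq_smul]

-- In terms of `P = tr G - G` the left side is `-3 det (tr P - 2 P)`, and `tr P - 2 P = 2 G`.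
lemma trace_cubic_trace_smul_one_sub (G : Matrix (Fin 3) (Fin 3) K) :
    (G.trace • 1 - G).trace ^ 3 - 6 * (G.trace • 1 - G).trace * ((G.trace • 1 - G) ^ 2).trace
      + 8 * ((G.trace • 1 - G) ^ 3).trace = -24 * G.det := by
  simp only [pow_succ, pow_zero, one_mul, trace_fin_three, det_fin_three, mul_apply,
    Fin.sum_univ_three, Matrix.sub_apply, Matrix.smul_apply, smul_eq_mul, one_apply, Fin.reduceEq,
    if_true, if_false]
  ring

end CrossProductMatrix

section Scatter

variable {ι n K : Type*} [Fintype ι]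

/-- The scatter matrix of a finite family of points, up to scaling by `2 * card ι`: summing over
ordered pairs of points rather than deviations from the centroid avoids division. -/
def scatterMatrix [CommRing K] (c : ι → n → K) : Matrix n n K :=
  ∑ i, ∑ j, vecMulVec (c j - c i) (c j - c i)

lemma two_nsmul_cauchySchwarzDefect_toMatrix'_crossProduct [CommRing K] (c : ι → Fin 3 → K) :
    2 • cauchySchwarzDefect (fun i => (crossProduct (c i)).toMatrix') =
      (scatterMatrix c).trace • 1 - scatterMatrix c := by
  rw [← neg_inj, ← sum_sum_sub_sq, neg_sub]
  simp only [scatterMatrix, ← map_sub, toMatrix'_crossProduct_sq, Finset.sum_sub_distrib,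
    trace_sum, trace_vecMulVec, Finset.sum_smul]

lemma scatterMatrix_mulVec_mem_vectorSpan [Fintype n] [CommRing K] (c : ι → n → K) (v : n → K) :
    scatterMatrix c *ᵥ v ∈ vectorSpan K (Set.range c) := by
  simp only [scatterMatrix, sum_mulVec, vecMulVec_mulVec]
  refine sum_mem fun i _ => sum_mem fun j _ => ?_
  rw [op_smul_eq_smul]
  exact Submodule.smul_mem _ _ <|
    vsub_mem_vectorSpan K (Set.mem_range_self j) (Set.mem_range_self i)

lemma det_scatterMatrix_eq_zero [Fintype n] [DecidableEq n] [Field K] {c : ι → n → K}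
    (hc : Module.finrank K (vectorSpan K (Set.range c)) < Fintype.card n) :
    (scatterMatrix c).det = 0 := by
  by_contra hdet
  have hsurj : Function.Surjective (scatterMatrix c).mulVec :=
    mulVec_surjective_iff_isUnit.mpr <| (isUnit_iff_isUnit_det _).mpr (Ne.isUnit hdet)
  have htop : vectorSpan K (Set.range c) = ⊤ := by
    refine Submodule.eq_top_iff'.mpr fun w => ?_
    obtain ⟨v, rfl⟩ := hsurj w
    exact scatterMatrix_mulVec_mem_vectorSpan c v
  rw [htop, finrank_top, Module.finrank_fintype_fun_eq_card] at hc
  exact hc.false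

end Scatter

lemma sextic_blockDifference_crossProduct {ι m K : Type*} [Fintype ι] [DecidableEq ι] [Fintype m]
    [DecidableEq m] [CommRing K] {U : ι → Matrix m (Fin 3) K} {V : ι → Matrix (Fin 3) m K}
    (hVU : ∀ i, V i * U i = 1) (c : ι → Fin 3 → K) {F : Matrix (ι × m) (ι × m) K}
    (hF : F = blockDifference U (fun i => (crossProduct (c i)).toMatrix') V) :
    (F ^ 2).trace ^ 3 - 12 * (F ^ 2).trace * (F ^ 4).trace + 32 * (F ^ 6).trace =
      -24 * (scatterMatrix c).det := by
  set Q := cauchySchwarzDefect fun i => (crossProduct (c i)).toMatrix' with hQ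
  have htrace_sq : (F ^ 2).trace = 2 * Q.trace := by
    simpa [hF] using trace_blockDifference_pow_two_mul hVU _ one_ne_zero
  have htrace_four : (F ^ 4).trace = 2 * (Q ^ 2).trace :=
    hF ▸ trace_blockDifference_pow_two_mul hVU _ two_ne_zero
  have htrace_six : (F ^ 6).trace = 2 * (Q ^ 3).trace :=
    hF ▸ trace_blockDifference_pow_two_mul hVU _ three_ne_zero
  have hcubic := trace_cubic_trace_smul_one_sub (scatterMatrix c)
  rw [← two_nsmul_cauchySchwarzDefect_toMatrix'_crossProduct, ← hQ] at hcubic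
  simp only [smul_pow, trace_smul] at hcubic
  simp only [nsmul_eq_mul, Nat.cast_pow, Nat.cast_ofNat] at hcubic
  rw [htrace_sq, htrace_four, htrace_six]
  linear_combination hcubic

lemma coplanar_range_fin_three {K V P : Type*} [DivisionRing K] [AddCommGroup V] [Module K V]
    [AddTorsor V P] (c : Fin 3 → P) : Coplanar K (Set.range c) := by
  have hrange : Set.range c = {c 0, c 1, c 2} := by
    ext; simp [Fin.exists_fin_succ, eq_comm]
  exact hrange ▸ coplanar_triple K (c 0) (c 1) (c 2)

theorem stmt16_general {ι K : Type*} [Fintype ι] [DecidableEq ι] [Field K]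
    (R : ι → Matrix (Fin 3) (Fin 3) K) (c : ι → Fin 3 → K)
    (hR : ∀ i, R i * (R i)ᵀ = 1) (hc : Coplanar K (Set.range c))
    (E : ι → ι → Matrix (Fin 3) (Fin 3) K)
    (hE : ∀ i j, E i j = R i * (crossProduct (c j - c i)).toMatrix' * (R j)ᵀ)
    (F : Matrix (ι × Fin 3) (ι × Fin 3) K)
    (hF : ∀ p q, F p q = if p.1 = q.1 then 0 else E p.1 q.1 p.2 q.2) :
    (F ^ 2).trace ^ 3 - 12 * (F ^ 2).trace * (F ^ 4).trace
      + 32 * (F ^ 6).trace = 0 := by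
  have hF_eq : F = blockDifference R (fun i => (crossProduct (c i)).toMatrix') fun i => (R i)ᵀ := by
    ext p q
    rw [hF, blockDifference, of_apply, ← map_sub, ← map_sub, ← hE]
    split_ifs with hpq
    · simp [hE, hpq]
    · rfl
  have hdet : (scatterMatrix c).det = 0 :=
    det_scatterMatrix_eq_zero <| by
      simpa using Nat.lt_succ_of_le hc.finrank_le_two
  rw [sextic_blockDifference_crossProduct (fun i => mul_eq_one_comm.mp (hR i)) c hF_eq, hdet,
    mul_zero]

lemma crossMat_eq_toMatrix'_crossProduct (c : Fin 3 → ℂ) :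
    crossMat c = (crossProduct c).toMatrix' := by
  ext i j
  fin_cases i <;> fin_cases j <;> simp [crossMat, LinearMap.toMatrix'_apply, cross_apply]

/-- Martyushev's sextic (2.20) for compatible essential matrix triples, via the
9×9 block matrix of (2.7). Indices are 0-based: camera `i+1` of the paper is
camera `i` here. -/
theorem stmt16 (R : Fin 3 → Matrix (Fin 3) (Fin 3) ℂ) (c : Fin 3 → Fin 3 → ℂ)
    (hR : ∀ i, R i * (R i)ᵀ = 1) (hdR : ∀ i, (R i).det = 1)
    (E : Fin 3 → Fin 3 → Matrix (Fin 3) (Fin 3) ℂ)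
    (hE : ∀ i j, E i j = R i * crossMat (c j - c i) * (R j)ᵀ)
    (F : Matrix (Fin 3 × Fin 3) (Fin 3 × Fin 3) ℂ)
    (hF : ∀ p q, F p q = if p.1 = q.1 then 0 else E p.1 q.1 p.2 q.2) :
    (F ^ 2).trace ^ 3 - 12 * (F ^ 2).trace * (F ^ 4).trace
      + 32 * (F ^ 6).trace = 0 := by
  simp only [crossMat_eq_toMatrix'_crossProduct] at hE
  exact stmt16_general R c hR (coplanar_range_fin_three c) E hE F hF
end
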